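/- Let R be a commutative ring and b, c, d ∈ R. Then the normalised elliptic divisibility sequence normEDS b c d : ℤ → R is a divisibility sequence: for all integers m and n, normEDS b c d m divides normEDS b c d (m·n) in R. -/

import Mathlib

/-!
The proof shows that over a domain with `b ≠ 0` the sequence `W = normEDS b c d` is elliptic, deduces
divisibility when no `W k` with `k ≠ 0` vanishes, and specialises from the universal ring
`ℤ[b, c, d]`.

*Ellipticity.* In terms of the atoms `A(x, y) = W((x + y) / 2) W((x - y) / 2)`, the elliptic
relator `(x, y, z, w)` is the Plücker expression `A(x,y)A(z,w) - A(x,z)A(y,w) + A(x,w)A(y,z)`.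
If the six relators `(·, ·, s, t)` on the pairs from `{x, y, z, w}` vanish, then
`A(s,t)² (x, y, z, w) = 0` by the Plücker identity (`atomRel_eq_zero_of_pairs`). Let the base pair
`(s, t)` be `(2, 0)` for even indices and `(3, 1)` for odd ones, so that `A(s,t)` is `1` or `b`. The
defining recurrences of `normEDS` say exactly that `(z + 1, z - 1, s, t) = 0`
(`atomRel_consecutive`). The relator is invariant under the change of variables
`(a, b, c, d) ↦ (h - d, h - c, h - b, h - a)`, `h = (a + b + c + d) / 2`, which turns
`(u + v, u - v, e + 2, e)` into `(u + 1, u - 1, v + e + 1, v - e - 1)` up to signs. All pairs from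
the latter other than the consecutive pair `(u + 1, u - 1)` are smaller than `(u + v, u - v)`, so
all relators on a base pair vanish by induction (`atomRel_base`).

*Divisibility.* For the base pair `(2, 0)` this reads
`W(p + q) W(p - q) = W(p + 1) W(p - 1) W(q)² - W(q + 1) W(q - 1) W(p)²`. With `p = (m + 1) k` and
`q = m k` the right side is divisible by `W(k)²` by induction and the left side is
`W((2m + 1) k) W(k)`, so one factor `W(k)` can be cancelled in a domain. It is nonzero in
`ℤ[b, c, d]` because `normEDS 2 3 2` is the identity sequence.
-/

open IsEllipticNet

/-- Relators on a fixed pair `(s, t)` determine all relators, up to `A(s, t)²`. -/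
lemma atomRel_eq_zero_of_pairs {R : Type*} [CommRing R] [IsDomain R] (W : ℤ → R)
    {x y z w s t : ℤ} (hst : atom W s t ≠ 0)
    (hxy : atomRel W x y s t = 0) (hxz : atomRel W x z s t = 0) (hxw : atomRel W x w s t = 0)
    (hyz : atomRel W y z s t = 0) (hyw : atomRel W y w s t = 0) (hzw : atomRel W z w s t = 0) :
    atomRel W x y z w = 0 := by
  refine (mul_eq_zero.mp ?_).resolve_left (pow_ne_zero 2 hst)
  unfold atomRel at *
  linear_combination
    atom W s t * atom W z w * hxy
      + (atom W x s * atom W y t - atom W x t * atom W y s) * hzw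
      - atom W s t * atom W y w * hxz
      - (atom W x s * atom W z t - atom W x t * atom W z s) * hyw
      + atom W s t * atom W y z * hxw
      + (atom W x s * atom W w t - atom W x t * atom W w s) * hyz

lemma atomRel_swap_left {R : Type*} [CommRing R] {W : ℤ → R} (odd : W.Odd) (x y s t : ℤ) :
    atomRel W y x s t = -atomRel W x y s t := by
  have h := neg_atom odd x y
  unfold atomRel
  linear_combination -atom W s t * h

lemma normEDS_function_odd {R : Type*} [CommRing R] (b c d : R) : (normEDS b c d).Odd :=
  normEDS_neg b c d

lemma atom_base_ne_zero {R : Type*} [CommRing R] [IsDomain R] {b : R} (c d : R) (hb : b ≠ 0)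
    {e : ℤ} (he : e = 0 ∨ e = 1) : atom (normEDS b c d) (e + 2) e ≠ 0 := by
  rcases he with rfl | rfl
  · simp [atom]
  · simpa [atom] using hb

/-- The odd and even recurrences of `normEDS`, as relators of consecutive indices of one parity. -/
lemma atomRel_consecutive {R : Type*} [CommRing R] (b c d : R) {e z : ℤ} (he : e = 0 ∨ e = 1)
    (hz : (z + 1) % 2 = e) : atomRel (normEDS b c d) (z + 1) (z - 1) (e + 2) e = 0 := by
  rcases he with rfl | rfl
  · obtain ⟨m, rfl⟩ : ∃ m, z = 2 * m + 1 := ⟨z / 2, by omega⟩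
    have h := rel_odd (normEDS b c d) m
    rw [rel_eq, normEDS_odd, normEDS_one] at h
    convert h using 1
    · congr 1 <;> ring
    · ring
  · obtain ⟨m, rfl⟩ : ∃ m, z = 2 * m := ⟨z / 2, by omega⟩
    have h := rel_even (normEDS b c d) m
    rw [rel_eq, normEDS_two, normEDS_one, one_pow, mul_one, normEDS_even] at h
    rw [← atomRel_neg₄, ← atomRel_avg_sub _ (by omega)]
    convert h using 1
    · congr 1 <;> omega
    · ring

/-- Every relator on a base pair vanishes, by induction on `|x| + |y|`. -/
lemma atomRel_base {R : Type*} [CommRing R] [IsDomain R] {b : R} (c d : R) (hb : b ≠ 0) (N : ℕ) :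
    ∀ e x y : ℤ, (e = 0 ∨ e = 1) → x % 2 = e → y % 2 = e → |x| + |y| = N →
      atomRel (normEDS b c d) x y (e + 2) e = 0 := by
  have odd := normEDS_function_odd b c d
  induction N using Nat.strong_induction_on with
  | _ N ih =>
    suffices main : ∀ e x y : ℤ, (e = 0 ∨ e = 1) → x % 2 = e → y % 2 = e → 0 ≤ y → y ≤ x →
        x + y = N → atomRel (normEDS b c d) x y (e + 2) e = 0 by
      intro e x y he hx hy hN
      rw [← atomRel_abs₁ odd, ← atomRel_abs₂ odd]
      have hx' : |x| % 2 = e := by rcases abs_choice x with h | h <;> omega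
      have hy' : |y| % 2 = e := by rcases abs_choice y with h | h <;> omega
      rcases le_total |y| |x| with h | h
      · exact main e _ _ he hx' hy' (abs_nonneg y) h hN
      · rw [atomRel_swap_left odd, main e _ _ he hy' hx' (abs_nonneg x) h (by omega), neg_zero]
    intro e x y he hx hy h0 hyx hN
    rcases eq_or_ne y x with rfl | hne
    · simp
    rcases eq_or_ne y e with rfl | hye
    · simp [odd]
    rcases eq_or_ne y (e + 2) with rfl | hye2
    · simp
    obtain ⟨u, hu⟩ : ∃ u, x + y = 2 * u := ⟨(x + y) / 2, by omega⟩
    obtain ⟨v, hv⟩ : ∃ v, x - y = 2 * v := ⟨(x - y) / 2, by omega⟩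
    obtain rfl : x = u + v := by omega
    obtain rfl : y = u - v := by omega
    have hrel : atomRel (normEDS b c d) (u + v) (u - v) (e + 2) e =
        atomRel (normEDS b c d) (u + 1) (u - 1) (v + e + 1) (v - e - 1) := by
      rw [← atomRel_avg_sub _ (by omega), ← atomRel_neg₄]
      congr 1 <;> omega
    rw [hrel]
    obtain ⟨f, hf⟩ : ∃ f, (u + 1) % 2 = f := ⟨_, rfl⟩
    have hf01 : f = 0 ∨ f = 1 := by omega
    have small (p q : ℤ) (hp : p % 2 = f) (hq : q % 2 = f)
        (hpq : p + q < N ∧ -p - q < N ∧ p - q < N ∧ q - p < N) :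
        atomRel (normEDS b c d) p q (f + 2) f = 0 := by
      have hlt : |p| + |q| < N := by
        rcases abs_choice p with h | h <;> rcases abs_choice q with h' | h' <;> omega
      exact ih (|p| + |q|).toNat (by omega) f p q hf01 hp hq
        (Int.toNat_of_nonneg (by positivity)).symm
    -- `y ≥ e + 4` here, as `y ≥ 0` has the parity of `e` and differs from `e` and `e + 2`.
    have hy4 : e + 4 ≤ u - v := by omega
    exact atomRel_eq_zero_of_pairs _ (atom_base_ne_zero c d hb hf01)
      (atomRel_consecutive b c d hf01 hf)
      (small _ _ (by omega) (by omega) (by omega)) (small _ _ (by omega) (by omega) (by omega))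
      (small _ _ (by omega) (by omega) (by omega)) (small _ _ (by omega) (by omega) (by omega))
      (small _ _ (by omega) (by omega) (by omega))

lemma normEDS_add_mul_sub {R : Type*} [CommRing R] [IsDomain R] {b : R} (c d : R) (hb : b ≠ 0)
    (p q : ℤ) : normEDS b c d (p + q) * normEDS b c d (p - q) =
      normEDS b c d (p + 1) * normEDS b c d (p - 1) * normEDS b c d q ^ 2 -
        normEDS b c d (q + 1) * normEDS b c d (q - 1) * normEDS b c d p ^ 2 := by
  have h := atomRel_base c d hb (|2 * p| + |2 * q|).toNat 0 (2 * p) (2 * q) (Or.inl rfl)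
    (by omega) (by omega) (Int.toNat_of_nonneg (by positivity)).symm
  have h' := rel_eq (normEDS b c d) p q 1 0
  simp only [add_zero, mul_one, zero_add] at h h'
  rw [h, rel] at h'
  simp only [add_zero, normEDS_one] at h'
  linear_combination h'

lemma normEDS_dvd_of_isDomain {R : Type*} [CommRing R] [IsDomain R] {b : R} (c d : R) (hb : b ≠ 0)
    {k : ℤ} (hk : normEDS b c d k ≠ 0) (n : ℕ) : normEDS b c d k ∣ normEDS b c d (n * k) := by
  induction n using complEDSRec with
  | zero => simp
  | one => simp
  | even m h =>
    have h2 := h.trans (normEDS_dvd_normEDS_two_mul b c d _)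
    rwa [← mul_assoc, ← Nat.cast_ofNat, ← Nat.cast_mul] at h2
  | odd m h1 h2 =>
    have h := normEDS_add_mul_sub c d hb ((m + 2 : ℕ) * k) ((m + 1 : ℕ) * k)
    rw [← add_mul, ← sub_mul, show ((m + 2 : ℕ) : ℤ) - (m + 1 : ℕ) = 1 by push_cast; ring,
      one_mul, show ((m + 2 : ℕ) : ℤ) + (m + 1 : ℕ) = (2 * (m + 1) + 1 : ℕ) by push_cast; ring] at h
    refine (mul_dvd_mul_iff_right hk).mp ?_
    rw [h, ← sq]
    exact dvd_sub ((pow_dvd_pow_of_dvd h1 2).mul_left _) ((pow_dvd_pow_of_dvd h2 2).mul_left _)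

lemma normEDS_two_three_two_natCast (n : ℕ) : normEDS (2 : ℤ) 3 2 n = n := by
  induction n using normEDSRec with
  | zero => simp
  | one => simp
  | two => exact normEDS_two ..
  | three => exact normEDS_three ..
  | four => exact normEDS_four ..
  | even m h1 h2 h3 h4 h5 =>
    have h := normEDS_even (2 : ℤ) 3 2 (m + 3)
    push_cast at h1 h2 h3 h4 h5 ⊢
    rw [show (m + 3 - 1 : ℤ) = m + 2 by ring, show (m + 3 + 2 : ℤ) = m + 5 by ring,
      show (m + 3 - 2 : ℤ) = m + 1 by ring, show (m + 3 + 1 : ℤ) = m + 4 by ring,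
      h1, h2, h3, h4, h5] at h
    refine mul_right_cancel₀ two_ne_zero (h.trans ?_)
    ring
  | odd m h1 h2 h3 h4 =>
    have h := normEDS_odd (2 : ℤ) 3 2 (m + 2)
    push_cast at h1 h2 h3 h4 ⊢
    rw [show (m + 2 + 2 : ℤ) = m + 4 by ring, show (m + 2 - 1 : ℤ) = m + 1 by ring,
      show (m + 2 + 1 : ℤ) = m + 3 by ring, h1, h2, h3, h4] at h
    refine h.trans ?_
    ring

lemma normEDS_two_three_two (n : ℤ) : normEDS (2 : ℤ) 3 2 n = n := by
  obtain ⟨m, rfl | rfl⟩ := n.eq_nat_or_neg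
  · exact normEDS_two_three_two_natCast m
  · rw [normEDS_neg, normEDS_two_three_two_natCast]

open MvPolynomial in
/-- The universal normalised EDS, over `ℤ[b, c, d]`, vanishes only at `0`. -/
lemma normEDS_universal_ne_zero {k : ℤ} (hk : k ≠ 0) :
    normEDS (X 0 : MvPolynomial (Fin 3) ℤ) (X 1) (X 2) k ≠ 0 := by
  intro h
  have h' := congrArg (aeval (R := ℤ) ![(2 : ℤ), 3, 2]) h
  rw [map_normEDS, map_zero] at h'
  simp only [aeval_X] at h'
  exact hk ((normEDS_two_three_two k).symm.trans h')

/-- Theorem 4.2 (second half): every normalised EDS is a divisibility sequence: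
`normEDS b c d m` divides `normEDS b c d (m * n)` for all integers `m`, `n`. -/
theorem normEDS_dvd {R : Type*} [CommRing R] (b c d : R) (m n : ℤ) :
    normEDS b c d m ∣ normEDS b c d (m * n) := by
  rcases eq_or_ne m 0 with rfl | hm
  · simp
  have key (n : ℕ) : normEDS b c d m ∣ normEDS b c d (n * m) := by
    have h := map_dvd (MvPolynomial.aeval (R := ℤ) ![b, c, d])
      (normEDS_dvd_of_isDomain (MvPolynomial.X 1) (MvPolynomial.X 2) (MvPolynomial.X_ne_zero 0)
        (normEDS_universal_ne_zero hm) n)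
    rw [map_normEDS, map_normEDS] at h
    simpa only [MvPolynomial.aeval_X] using! h
  obtain ⟨k, rfl | rfl⟩ := n.eq_nat_or_neg
  · rw [mul_comm]
    exact key k
  · rw [mul_neg, normEDS_neg, dvd_neg, mul_comm]
    exact key k
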